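/- Let Φ be a Young function of class Δ₂ and let f satisfy (H₁)–(H₄). For each integer n ≥ 1 let f_n be the regularized integrand obtained by mollification in the last variable. Then for every measurable vector field v : Q×Ω×ℝ^N → ℝ^N, ℤ^N-periodic in the last variable and with ∫_{Q×Ω×Y} Φ(|v|) dx dμ dy < ∞, one has ∫_{Q×Ω×Y} |f_n(x,ω,y,v(x,ω,y)) − f(x,ω,y,v(x,ω,y))| dx dμ(ω) dy → 0 as n → ∞. -/

import Mathlib

open MeasureTheory Filter Topology ENNReal

noncomputable section

/-- Euclidean norm on `Fin N → ℝ`. -/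
def enorm2 {N : ℕ} (v : Fin N → ℝ) : ℝ := Real.sqrt (∑ i, v i ^ 2)

/-- `Φ : [0,∞) → [0,∞)` is a Young function: continuous, convex, positive on `(0,∞)`,
with `Φ(t)/t → 0` as `t → 0⁺` and `Φ(t)/t → ∞` as `t → ∞` (so `Φ(0) = 0`). -/
def IsYoung (Φ : ℝ → ℝ) : Prop :=
  ContinuousOn Φ (Set.Ici 0) ∧ ConvexOn ℝ (Set.Ici 0) Φ ∧ Φ 0 = 0 ∧
    (∀ t : ℝ, 0 < t → 0 < Φ t) ∧ (∀ t : ℝ, 0 ≤ t → 0 ≤ Φ t) ∧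
    Tendsto (fun t => Φ t / t) (nhdsWithin 0 (Set.Ioi 0)) (nhds 0) ∧
    Tendsto (fun t => Φ t / t) atTop atTop

/-- The `Δ₂`-condition (at infinity). -/
def Delta2 (Φ : ℝ → ℝ) : Prop :=
  ∃ α : ℝ, 0 < α ∧ ∃ t₀ : ℝ, 0 ≤ t₀ ∧ ∀ t : ℝ, t₀ ≤ t → Φ (2 * t) ≤ α * Φ t

/-- The `Δ'`-condition (at infinity). -/
def DeltaPrime (Φ : ℝ → ℝ) : Prop :=
  ∃ k : ℝ, 0 < k ∧ ∃ t₀ s₀ : ℝ, 0 ≤ t₀ ∧ 0 ≤ s₀ ∧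
    ∀ t s : ℝ, t₀ ≤ t → s₀ ≤ s → Φ (t * s) ≤ k * Φ t * Φ s

/-- The conjugate Young function `Φ̃(t) = sup_{s ≥ 0} (st − Φ(s))`. -/
def conjY (Φ : ℝ → ℝ) (t : ℝ) : ℝ := sSup ((fun s => s * t - Φ s) '' Set.Ici 0)

/-- The Luxemburg norm `‖u‖_{Φ,X} = inf {δ > 0 : ∫_X Φ(|u|/δ) dν ≤ 1}` (`+∞` if no such `δ`). -/
def luxNorm {X : Type*} [MeasurableSpace X] (Φ : ℝ → ℝ) (ν : Measure X) (u : X → ℝ) : ℝ≥0∞ :=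
  sInf {d : ℝ≥0∞ | ∃ δ : ℝ, 0 < δ ∧ d = ENNReal.ofReal δ ∧
    (∫⁻ x, ENNReal.ofReal (Φ (|u x| / δ)) ∂ν) ≤ 1}

/-- An `N`-dimensional dynamical system on `Ω` preserving `μ`. -/
def IsDynSys {N : ℕ} {Ω : Type*} [MeasurableSpace Ω] (μ : Measure Ω)
    (T : (Fin N → ℝ) → Ω → Ω) : Prop :=
  T 0 = id ∧ (∀ x y : Fin N → ℝ, T (x + y) = T x ∘ T y) ∧
    (∀ x : Fin N → ℝ, MeasurePreserving (T x) μ μ) ∧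
    Measurable fun p : (Fin N → ℝ) × Ω => T p.1 p.2

/-- `ℤ^N`-periodicity. -/
def ZPeriodic {N : ℕ} (g : (Fin N → ℝ) → ℝ) : Prop :=
  ∀ (y : Fin N → ℝ) (k : Fin N → ℤ), g (y + fun i => (k i : ℝ)) = g y

/-- The unit cube `Y = [0,1]^N`. -/
def Ycube (N : ℕ) : Set (Fin N → ℝ) := Set.Icc 0 1

/-- `ℳ` is countably generated modulo `μ`-null sets. -/
def CountGenModNull {Ω : Type*} [MeasurableSpace Ω] (μ : Measure Ω) : Prop :=
  ∃ S : ℕ → Set Ω, (∀ n, MeasurableSet (S n)) ∧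
    ∀ A : Set Ω, MeasurableSet A →
      ∃ B : Set Ω, MeasurableSet[MeasurableSpace.generateFrom (Set.range S)] B ∧
        μ (symmDiff A B) = 0

/-- Weak stochastic two-scale convergence of `(u k)` to `u₀` along the sequence `(ε k)`. -/
def WeakStoch2Scale {N : ℕ} {Ω : Type*} [MeasurableSpace Ω] (μ : Measure Ω)
    (T : (Fin N → ℝ) → Ω → Ω) (Q : Set (Fin N → ℝ)) (ε : ℕ → ℝ)
    (u : ℕ → (Fin N → ℝ) → Ω → ℝ) (u₀ : (Fin N → ℝ) → Ω → (Fin N → ℝ) → ℝ) : Prop :=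
  ∀ φ : (Fin N → ℝ) → ℝ, ContDiff ℝ (⊤ : ℕ∞) φ → HasCompactSupport φ → tsupport φ ⊆ Q →
    ∀ ψ : Ω → ℝ, Measurable ψ → (∃ C : ℝ, ∀ ω, |ψ ω| ≤ C) →
      ∀ g : (Fin N → ℝ) → ℝ, Continuous g → ZPeriodic g →
        Tendsto
          (fun k => ∫ x in Q, (∫ ω, u k x ω * φ x * ψ (T ((ε k)⁻¹ • x) ω) *
              g (((ε k) ^ 2)⁻¹ • x) ∂μ))
          atTop
          (nhds (∫ x in Q, (∫ ω, (∫ y in Ycube N, u₀ x ω y * φ x * ψ ω * g y) ∂μ)))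


lemma enorm2_eq {N : ℕ} (v : Fin N → ℝ) : enorm2 v = ‖WithLp.toLp 2 v‖ := by
  rw [EuclideanSpace.norm_eq]; simp [enorm2]

lemma enorm2_nonneg {N : ℕ} (v : Fin N → ℝ) : 0 ≤ enorm2 v := Real.sqrt_nonneg _

lemma enorm2_sub_le {N : ℕ} (v w : Fin N → ℝ) : enorm2 (v - w) ≤ enorm2 v + enorm2 w := by
  simp only [enorm2_eq, WithLp.toLp_sub]; exact norm_sub_le _ _

lemma norm_le_enorm2 {N : ℕ} (v : Fin N → ℝ) : ‖v‖ ≤ enorm2 v := by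
  rw [pi_norm_le_iff_of_nonneg (enorm2_nonneg v)]
  intro i
  rw [Real.norm_eq_abs]
  apply Real.abs_le_sqrt
  exact Finset.single_le_sum (f := fun i => v i ^ 2) (fun i _ => sq_nonneg _) (Finset.mem_univ i)

lemma continuous_enorm2 {N : ℕ} : Continuous (enorm2 (N := N)) := by
  unfold enorm2; fun_prop

lemma young_mono {Φ : ℝ → ℝ} (hΦ : IsYoung Φ) {s t : ℝ} (hs : 0 ≤ s) (hst : s ≤ t) :
    Φ s ≤ Φ t := by
  obtain ⟨-, hconv, h0, -, hnn, -⟩ := hΦ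
  rcases eq_or_lt_of_le (hs.trans hst) with h | ht
  · have : s = t := by linarith
    rw [this]
  have hd : s / t ≤ 1 := by rw [div_le_one ht]; exact hst
  have hd0 : 0 ≤ s / t := by positivity
  have := hconv.2 (x := t) (y := 0) (Set.mem_Ici.2 ht.le) (Set.mem_Ici.2 le_rfl) hd0
    (sub_nonneg.2 hd) (by ring)
  simp only [smul_eq_mul, mul_zero, add_zero, h0] at this
  rw [div_mul_cancel₀ _ ht.ne'] at this
  nlinarith [hnn t ht.le]

lemma young_shift {Φ : ℝ → ℝ} (hΦ : IsYoung Φ) (h2 : Delta2 Φ) :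
    ∃ C : ℝ, 0 ≤ C ∧ ∀ t, 0 ≤ t → Φ (t + 1) ≤ C * (1 + Φ t) := by
  obtain ⟨α, hα, t₀, ht₀, h⟩ := h2
  have hnn := hΦ.2.2.2.2.1
  have hM := hnn (t₀ + 1 + 1) (by linarith)
  refine ⟨α + Φ (t₀ + 1 + 1), by linarith, fun t ht => ?_⟩
  have hp := hnn t ht
  rcases le_total t (t₀ + 1) with hle | hle
  · have := young_mono hΦ (s := t + 1) (t := t₀ + 1 + 1) (by linarith) (by linarith)
    nlinarith [mul_nonneg hM hp, mul_nonneg hα.le hp]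
  · have := young_mono hΦ (s := t + 1) (t := 2 * t) (by linarith) (by linarith)
    have h' := h t (by linarith)
    nlinarith [mul_nonneg hM hp, mul_nonneg hα.le hp]

lemma moll_bound {N : ℕ} (θ : (Fin N → ℝ) → ℝ) (hc : Continuous θ) (hs : HasCompactSupport θ)
    (hnn : ∀ η, 0 ≤ θ η) (r : ℝ) (hsup : tsupport θ ⊆ {η : Fin N → ℝ | enorm2 η ≤ r})
    (h1 : (∫ η, θ η) = 1) (g : (Fin N → ℝ) → ℝ) (hg : Continuous g) (v : Fin N → ℝ) (K : ℝ)
    (hK : ∀ η, enorm2 η ≤ r → |g (v - η) - g v| ≤ K) :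
    |(∫ η, θ η * g (v - η)) - g v| ≤ K := by
  have hi : Integrable θ := hc.integrable_of_hasCompactSupport hs
  have hi2 : Integrable (fun η => θ η * g (v - η)) :=
    (by fun_prop : Continuous fun η => θ η * g (v - η)).integrable_of_hasCompactSupport
      hs.mul_right
  have e : (∫ η, θ η * g (v - η)) - g v = ∫ η, θ η * (g (v - η) - g v) := by
    simp only [mul_sub]
    rw [integral_sub hi2 (hi.mul_const _), integral_mul_const, h1, one_mul]
  rw [e, ← Real.norm_eq_abs]
  have hb : ∀ᵐ η, ‖θ η * (g (v - η) - g v)‖ ≤ θ η * K := by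
    refine Eventually.of_forall fun η => ?_
    by_cases h : η ∈ tsupport θ
    · rw [norm_mul, Real.norm_of_nonneg (hnn η), Real.norm_eq_abs]
      exact mul_le_mul_of_nonneg_left (hK η (hsup h)) (hnn η)
    · simp [image_eq_zero_of_notMem_tsupport h]
  refine (norm_integral_le_of_norm_le (hi.mul_const K) hb).trans ?_
  rw [integral_mul_const, h1, one_mul]

/-- L¹ convergence of the mollified integrands along Orlicz-bounded fields. -/
theorem stmt8 {N : ℕ} (hN : 1 ≤ N) {Ω : Type*} [MeasurableSpace Ω] (μ : Measure Ω)
    [IsProbabilityMeasure μ]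
    (Φ : ℝ → ℝ) (hΦ : IsYoung Φ) (hΦ2 : Delta2 Φ)
    (Q : Set (Fin N → ℝ)) (hQo : IsOpen Q) (hQb : Bornology.IsBounded Q)
    (f : (Fin N → ℝ) → Ω → (Fin N → ℝ) → (Fin N → ℝ) → ℝ)
    (hfmeas : ∀ x lam : Fin N → ℝ, Measurable fun p : Ω × (Fin N → ℝ) => f x p.1 p.2 lam)
    (hfcont : ∀ᵐ ω ∂μ, Continuous fun q : (Fin N → ℝ) × (Fin N → ℝ) × (Fin N → ℝ) =>
      f q.1 ω q.2.1 q.2.2)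
    (hH1 : ∃ ϖ : ℝ → ℝ, Continuous ϖ ∧ ϖ 0 = 0 ∧ (∀ t, 0 ≤ ϖ t) ∧
      ∃ a : (Fin N → ℝ) → ℝ, LocallyIntegrable a volume ∧
        ∀ᵐ p ∂(μ.prod (volume : Measure (Fin N → ℝ))), ∀ x x' lam : Fin N → ℝ,
          |f x p.1 p.2 lam - f x' p.1 p.2 lam| ≤ ϖ (enorm2 (x - x')) * (a p.2 + f x p.1 p.2 lam))
    (hH2 : ∀ᵐ p ∂(μ.prod (volume : Measure (Fin N → ℝ))), ∀ x : Fin N → ℝ,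
      StrictConvexOn ℝ Set.univ (f x p.1 p.2))
    (c₁ c₂ : ℝ) (hc₁ : 0 < c₁) (hc₂ : 0 < c₂)
    (hH3 : ∀ᵐ p ∂(μ.prod (volume : Measure (Fin N → ℝ))), ∀ x lam : Fin N → ℝ,
      c₁ * Φ (enorm2 lam) ≤ f x p.1 p.2 lam ∧ f x p.1 p.2 lam ≤ c₂ * (1 + Φ (enorm2 lam)))
    (hH4 : ∀ᵐ ω ∂μ, ∀ (x y lam : Fin N → ℝ) (k : Fin N → ℤ),
      f x ω (y + fun i => (k i : ℝ)) lam = f x ω y lam)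
    (θ : ℕ → (Fin N → ℝ) → ℝ)
    (hθ : ∀ n : ℕ, 1 ≤ n → ContDiff ℝ (⊤ : ℕ∞) (θ n) ∧ HasCompactSupport (θ n) ∧
      (∀ η, 0 ≤ θ n η) ∧ tsupport (θ n) ⊆ {η : Fin N → ℝ | enorm2 η ≤ 1 / (n : ℝ)} ∧
      (∫ η, θ n η) = 1)
    (v : (Fin N → ℝ) → Ω → (Fin N → ℝ) → Fin N → ℝ)
    (hvmeas : Measurable fun p : ((Fin N → ℝ) × Ω) × (Fin N → ℝ) => v p.1.1 p.1.2 p.2)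
    (hvper : ∀ (x : Fin N → ℝ) (ω : Ω) (y : Fin N → ℝ) (k : Fin N → ℤ),
      v x ω (y + fun i => (k i : ℝ)) = v x ω y)
    (hvint : (∫⁻ p, ENNReal.ofReal (Φ (enorm2 (v p.1.1 p.1.2 p.2)))
      ∂(((volume.restrict Q).prod μ).prod (volume.restrict (Ycube N)))) < ⊤) :
    Tendsto
      (fun n : ℕ => ∫ p,
        |(∫ η, θ n η * f p.1.1 p.1.2 p.2 (v p.1.1 p.1.2 p.2 - η)) -
            f p.1.1 p.1.2 p.2 (v p.1.1 p.1.2 p.2)|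
        ∂(((volume.restrict Q).prod μ).prod (volume.restrict (Ycube N))))
      atTop (nhds 0) := by
  classical
  set ν := ((volume.restrict Q).prod μ).prod (volume.restrict (Ycube N)) with hν
  have : IsFiniteMeasure (volume.restrict Q) := ⟨by
    simpa using hQb.measure_lt_top⟩
  have : IsFiniteMeasure (volume.restrict (Ycube N)) := ⟨by
    simpa [Ycube] using (isCompact_Icc (a := (0 : Fin N → ℝ)) (b := 1)).measure_lt_top⟩
  obtain ⟨C, hC, hsh⟩ := young_shift hΦ hΦ2
  have hnn := hΦ.2.2.2.2.1
  have hq1 : Measure.QuasiMeasurePreserving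
      (fun p : ((Fin N → ℝ) × Ω) × (Fin N → ℝ) => p.1.2) ν μ :=
    Measure.quasiMeasurePreserving_snd.comp Measure.quasiMeasurePreserving_fst
  have hq2 : Measure.QuasiMeasurePreserving
      (fun p : ((Fin N → ℝ) × Ω) × (Fin N → ℝ) => (p.1.2, p.2)) ν
      (μ.prod (volume : Measure (Fin N → ℝ))) := by
    have h1 : Measure.QuasiMeasurePreserving (id : (Fin N → ℝ) → (Fin N → ℝ))
        (volume.restrict (Ycube N)) volume :=
      ⟨measurable_id, by rw [Measure.map_id]; exact Measure.restrict_le_self.absolutelyContinuous⟩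
    exact MeasureTheory.QuasiMeasurePreserving.prodMap Measure.quasiMeasurePreserving_snd h1
  have hcont := hq1.ae hfcont
  have hgrow := hq2.ae hH3
  set F : ℕ → ((Fin N → ℝ) × Ω) × (Fin N → ℝ) → ℝ := fun n p =>
        |(∫ η, θ n η * f p.1.1 p.1.2 p.2 (v p.1.1 p.1.2 p.2 - η)) -
            f p.1.1 p.1.2 p.2 (v p.1.1 p.1.2 p.2)| with hF
  set G : ℕ → ((Fin N → ℝ) × Ω) × (Fin N → ℝ) → ℝ := fun n =>
    if AEStronglyMeasurable (F n) ν then F n else 0 with hG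
  have hFG : ∀ n, ∫ p, F n p ∂ν = ∫ p, G n p ∂ν := by
    intro n
    by_cases h : AEStronglyMeasurable (F n) ν
    · simp only [hG, if_pos h]
    · simp only [hG, if_neg h, Pi.zero_apply, integral_zero]
      exact integral_undef fun hi => h hi.1
  have hGF : ∀ n p, ‖G n p‖ ≤ F n p := by
    intro n p
    by_cases h : AEStronglyMeasurable (F n) ν
    · simp only [hG, if_pos h]; simp [hF]
    · simp only [hG, if_neg h]; simp [hF]
  change Tendsto (fun n => ∫ p, F n p ∂ν) atTop (nhds 0)
  simp_rw [hFG]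
  have hphi : Integrable (fun p : ((Fin N → ℝ) × Ω) × (Fin N → ℝ) =>
      Φ (enorm2 (v p.1.1 p.1.2 p.2))) ν := by
    have hm : Measurable (fun p : ((Fin N → ℝ) × Ω) × (Fin N → ℝ) =>
      Φ (enorm2 (v p.1.1 p.1.2 p.2))) := by
      have hc : Continuous fun w : Fin N → ℝ => Φ (enorm2 w) :=
        hΦ.1.comp_continuous continuous_enorm2 fun w => enorm2_nonneg w
      exact hc.measurable.comp hvmeas
    refine ⟨hm.aestronglyMeasurable, ?_⟩
    rw [hasFiniteIntegral_iff_ofReal (Eventually.of_forall fun p => hnn _ (enorm2_nonneg _))]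
    exact hvint
  have key : Tendsto (fun n => ∫ p, G n p ∂ν) atTop
      (nhds (∫ p : ((Fin N → ℝ) × Ω) × (Fin N → ℝ), (0 : ℝ) ∂ν)) := by
    refine tendsto_integral_filter_of_dominated_convergence
      (fun p => (c₂ * (1 + C)) * (1 + Φ (enorm2 (v p.1.1 p.1.2 p.2))) +
        c₂ * (1 + Φ (enorm2 (v p.1.1 p.1.2 p.2)))) ?_ ?_ ?_ ?_
    · refine Eventually.of_forall fun n => ?_
      by_cases h : AEStronglyMeasurable (F n) ν
      · simpa only [hG, if_pos h] using h
      · simp only [hG, if_neg h]; exact aestronglyMeasurable_zero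
    · filter_upwards [eventually_ge_atTop 1] with n hn
      filter_upwards [hcont, hgrow] with p hcp hgp
      refine (hGF n p).trans ?_
      obtain ⟨a1, a2, a3, a4, a5⟩ := hθ n hn
      refine moll_bound (θ n) a1.continuous a2 a3 _ a4 a5 (f p.1.1 p.1.2 p.2)
        (hcp.comp (by fun_prop : Continuous fun l : Fin N → ℝ => (p.1.1, p.2, l))) _ _ ?_
      intro η hη
      have hη1 : enorm2 η ≤ 1 := hη.trans (by
        rw [div_le_one (by positivity)]; exact_mod_cast hn)
      set w := v p.1.1 p.1.2 p.2
      have b1 := hgp p.1.1 (w - η)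
      have b2 := hgp p.1.1 w
      have m := young_mono hΦ (enorm2_nonneg (w - η))
        ((enorm2_sub_le w η).trans (add_le_add_right hη1 _))
      have s := hsh _ (enorm2_nonneg w)
      have p1 := hnn _ (enorm2_nonneg (w - η))
      have p2 := hnn _ (enorm2_nonneg w)
      have q1 := mul_nonneg hc₁.le p1
      have q2 := mul_nonneg hc₁.le p2
      have q3 : c₂ * (1 + Φ (enorm2 (w - η))) ≤ (c₂ * (1 + C)) * (1 + Φ (enorm2 w)) := by
        rw [mul_assoc]
        refine mul_le_mul_of_nonneg_left ?_ hc₂.le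
        nlinarith
      have q4 := mul_nonneg hc₂.le (by linarith : 0 ≤ 1 + Φ (enorm2 w))
      have q5 := mul_nonneg hc₂.le (by linarith : 0 ≤ 1 + Φ (enorm2 (w - η)))
      rw [abs_le]
      constructor <;> linarith [b1.1, b1.2, b2.1, b2.2]
    · exact (((integrable_const _).add hphi).const_mul _).add
        (((integrable_const _).add hphi).const_mul _)
    · filter_upwards [hcont] with p hcp
      have hg : Continuous (f p.1.1 p.1.2 p.2) :=
        hcp.comp (by fun_prop : Continuous fun l : Fin N → ℝ => (p.1.1, p.2, l))
      rw [Metric.tendsto_atTop]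
      intro ε hε
      obtain ⟨δ, hδ, hd⟩ := Metric.continuous_iff.1 hg (v p.1.1 p.1.2 p.2) (ε / 2) (by positivity)
      obtain ⟨M, hM⟩ := exists_nat_one_div_lt hδ
      refine ⟨M + 1, fun n hn => ?_⟩
      rw [dist_zero_right]
      refine ((hGF n p).trans ?_).trans_lt (half_lt_self hε)
      obtain ⟨a1, a2, a3, a4, a5⟩ := hθ n (by omega)
      refine moll_bound (θ n) a1.continuous a2 a3 _ a4 a5 (f p.1.1 p.1.2 p.2) hg _ _ ?_
      intro η hη
      have hh : (1 : ℝ) / n ≤ 1 / (M + 1) :=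
        one_div_le_one_div_of_le (by positivity) (by exact_mod_cast hn)
      have := hd (v p.1.1 p.1.2 p.2 - η) (by
        rw [dist_eq_norm, sub_sub_cancel_left, norm_neg]
        linarith [norm_le_enorm2 η])
      rw [Real.dist_eq] at this
      exact this.le
  simpa using key
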